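/- For every τ in the open interval ((q−2)/(q−1), 1) one has Π(τ, 2·2^(−q·((Ξ−2ξ)/(q(1−τ)) − 1)²)) ≤ 10·2^(τ·ξ) + 101. -/

import Mathlib

open scoped Classical ENNReal
open Real Set Filter

/-- The quadratic function `Q(s) = q·s²`. -/
noncomputable def Qf (q : ℤ) (s : ℝ) : ℝ := (q : ℝ) * s ^ 2

/-- The half-open interval `I_s = [2^(Q(s)), 2^(Q(s)) + Q(s+1) − Q(s) + Ξ)`. -/
noncomputable def Iset (q Ξ : ℤ) (s : ℝ) : Set ℝ :=
  Set.Ico ((2 : ℝ) ^ (Qf q s)) ((2 : ℝ) ^ (Qf q s) + Qf q (s + 1) - Qf q s + (Ξ : ℝ))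

/-- The half-open interval `J_s = [2^(Q(s)) + Q(s+1) − Q(s) + Ξ, 2^(Q(s+1)))`. -/
noncomputable def Jset (q Ξ : ℤ) (s : ℝ) : Set ℝ :=
  Set.Ico ((2 : ℝ) ^ (Qf q s) + Qf q (s + 1) - Qf q s + (Ξ : ℝ)) ((2 : ℝ) ^ (Qf q (s + 1)))

/-- The sequence `(x_j)` in `{0,1}`: `x_j = 0` iff `j + 1 ∈ I_s` for some integer `s ≥ 0`. -/
noncomputable def xseq (q Ξ : ℤ) (j : ℕ) : ℕ :=
  if ∃ s : ℕ, ((j : ℝ) + 1) ∈ Iset q Ξ (s : ℝ) then 0 else 1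

/-- `N(k) = #{ j ∈ {0,…,k−1} : x_j = 0 }`, with `N(0) = 0`. -/
noncomputable def Nf (q Ξ : ℤ) (k : ℕ) : ℕ :=
  ((Finset.range k).filter (fun j => xseq q Ξ j = 0)).card

/-- `B(0) = 0`, `B(1) = 1`, and for `k ≥ 2`,
`B(k) = 1 + #{ j ∈ {0,…,k−2} : x_j ≠ x_{j+1} }`. -/
noncomputable def Bf (q Ξ : ℤ) (k : ℕ) : ℕ :=
  if k = 0 then 0
  else 1 + ((Finset.range (k - 1)).filter (fun j => xseq q Ξ j ≠ xseq q Ξ (j + 1))).card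

/-- The length `|J_s| = 2^(Q(s+1)) − 2^(Q(s)) − (Q(s+1) − Q(s) + Ξ)` of `J_s`. -/
noncomputable def Jlen (q Ξ : ℤ) (s : ℝ) : ℝ :=
  (2 : ℝ) ^ (Qf q (s + 1)) - (2 : ℝ) ^ (Qf q s) - (Qf q (s + 1) - Qf q s + (Ξ : ℝ))

/-- `λ(s) = 1/|J_s|`. -/
noncomputable def lamf (q Ξ : ℤ) (s : ℝ) : ℝ := 1 / Jlen q Ξ s

/-- The two-variable series `Π(τ,λ) = Σ_{k≥0} 2^(−λk − τ·N(k) + τ·ξ·B(k))`, a sum in `[0,∞]`. -/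
noncomputable def Pi2 (q Ξ : ℤ) (ξ τ lam : ℝ) : ℝ≥0∞ :=
  ∑' k : ℕ, ENNReal.ofReal
    ((2 : ℝ) ^ (-lam * (k : ℝ) - τ * (Nf q Ξ k : ℝ) + τ * ξ * (Bf q Ξ k : ℝ)))

/-!
Cut the series into blocks of indices `k = j + 1` running through `I_s ∪ J_s`. On `I_s` the count
`N` grows by one at every step while `B = 2s + 1` is constant, so the terms decay geometrically and
`I_s` contributes at most `4 · 2^(τξ) · 2^(-s)`. On `J_s` both `N = q t² + Ξ t` and `B = 2t` are
constant, where `t = s + 1`; bounding the factor `2^(-λk)` by its value at `k = 2^(Q(s))` and the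
length of `J_s` by `2^(Q(t))`, one finds a contribution of at most `2^E(t)` with
`E(t) = d t (t - u) / u + d² t / (q u) - 2 · 2^(q ((t - 1)² - (u - 1)²))`,
`d = Ξ - 2ξ` and `u = d / (q (1 - τ))`. For `t < u` the quadratic term is negative; for `t > u` it
is beaten by the last term, which comes from `λ` and is exponentially large. Hence
`E(t) ≤ 2 - min (t - 1) |t - u| / 2`, and the sum over `t` is controlled by a geometric series
decaying away from `1` and another decaying away from `u`.
-/

section Inequalities

theorem min_div_two_le_mul_div_add {a b : ℝ} (ha : 0 ≤ a) (hb : 0 ≤ b) (hab : 0 < a + b) :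
    min a b / 2 ≤ a * b / (a + b) := by
  rw [div_le_div_iff₀ two_pos hab, ← min_mul_max a b, mul_assoc]
  refine mul_le_mul_of_nonneg_left ?_ (le_min ha hb)
  linarith [le_max_left a b, le_max_right a b]

theorem one_add_mul_log_two_le_two_rpow (x : ℝ) : 1 + x * log 2 ≤ (2 : ℝ) ^ x := by
  rw [Real.rpow_def_of_pos two_pos]
  linarith [Real.add_one_le_exp (log 2 * x)]

theorem two_rpow_neg_half_le : (2 : ℝ) ^ (-(1 / 2) : ℝ) ≤ 3 / 4 := by
  rw [Real.rpow_neg zero_le_two, ← Real.sqrt_eq_rpow]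
  refine inv_le_of_inv_le₀ (by norm_num) (Real.le_sqrt_of_sq_le ?_)
  norm_num

theorem two_rpow_neg_div_two_le (n : ℕ) : (2 : ℝ) ^ (-(n / 2) : ℝ) ≤ (3 / 4) ^ n :=
  calc (2 : ℝ) ^ (-(n / 2) : ℝ) = ((2 : ℝ) ^ (-(1 / 2) : ℝ)) ^ n := by
        rw [← Real.rpow_mul_natCast zero_le_two]
        congr 1
        ring
    _ ≤ (3 / 4) ^ n := by gcongr; exact two_rpow_neg_half_le

theorem two_rpow_neg_min_div_two_le (m n : ℕ) :
    (2 : ℝ) ^ (-(min (m : ℝ) n / 2)) ≤ (3 / 4) ^ m + (3 / 4) ^ n := by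
  rcases min_choice (m : ℝ) n with h | h <;> rw [h]
  · exact (two_rpow_neg_div_two_le m).trans (le_add_of_nonneg_right (by positivity))
  · exact (two_rpow_neg_div_two_le n).trans (le_add_of_nonneg_left (by positivity))

theorem sum_range_pow_le_inv_one_sub {r : ℝ} (h₀ : 0 ≤ r) (h₁ : r < 1) (n : ℕ) :
    ∑ i ∈ Finset.range n, r ^ i ≤ (1 - r)⁻¹ := by
  rw [← tsum_geometric_of_lt_one h₀ h₁]
  exact (summable_geometric_of_lt_one h₀ h₁).sum_le_tsum _ fun i _ => pow_nonneg h₀ i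

theorem sum_range_pow_dist_le {r : ℝ} (h₀ : 0 ≤ r) (h₁ : r < 1) (M n : ℕ) :
    ∑ m ∈ Finset.range M, r ^ Nat.dist m n ≤ 2 * (1 - r)⁻¹ := by
  have hleft : ∑ m ∈ Finset.range n, r ^ Nat.dist m n ≤ ∑ i ∈ Finset.range n, r ^ i := by
    rw [← Finset.sum_range_reflect]
    refine Finset.sum_le_sum fun m hm => pow_le_pow_of_le_one h₀ h₁.le ?_
    have := Finset.mem_range.1 hm
    rw [Nat.dist_eq_sub_of_le (by omega)]
    omega
  have hright : ∑ i ∈ Finset.range M, r ^ Nat.dist (n + i) n = ∑ i ∈ Finset.range M, r ^ i := by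
    refine Finset.sum_congr rfl fun i _ => ?_
    rw [Nat.dist_eq_sub_of_le_right (Nat.le_add_right n i), Nat.add_sub_cancel_left]
  calc ∑ m ∈ Finset.range M, r ^ Nat.dist m n
      ≤ ∑ m ∈ Finset.range (n + M), r ^ Nat.dist m n :=
        Finset.sum_le_sum_of_subset_of_nonneg (by simp) fun _ _ _ => pow_nonneg h₀ _
    _ ≤ ∑ i ∈ Finset.range n, r ^ i + ∑ i ∈ Finset.range M, r ^ i := by
        rw [Finset.sum_range_add, hright]
        gcongr
    _ ≤ 2 * (1 - r)⁻¹ := by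
        linarith [sum_range_pow_le_inv_one_sub h₀ h₁ n, sum_range_pow_le_inv_one_sub h₀ h₁ M]

theorem sum_range_eq_sum_sum_Ico {M : Type*} [AddCommMonoid M] {a : ℕ → ℕ} (ha : Monotone a)
    (ha₀ : a 0 = 0) (f : ℕ → M) (n : ℕ) :
    ∑ j ∈ Finset.range (a n), f j =
      ∑ s ∈ Finset.range n, ∑ j ∈ Finset.Ico (a s) (a (s + 1)), f j := by
  induction n with
  | zero => simp [ha₀]
  | succ n ih =>
    rw [Finset.sum_range_succ, ← ih, Finset.sum_range_add_sum_Ico _ (ha n.le_succ)]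

end Inequalities

section Counting

variable {q Ξ : ℤ}

theorem Nf_eq_count (k : ℕ) : Nf q Ξ k = Nat.count (fun j => xseq q Ξ j = 0) k :=
  (Nat.count_eq_card_filter_range _ _).symm

theorem Bf_succ_eq_one_add_count (k : ℕ) :
    Bf q Ξ (k + 1) = 1 + Nat.count (fun j => xseq q Ξ j ≠ xseq q Ξ (j + 1)) k := by
  rw [Nat.count_eq_card_filter_range, Bf, if_neg k.succ_ne_zero, Nat.add_sub_cancel]

theorem Nf_add_of_forall_eq_zero {a n : ℕ} (h : ∀ i < n, xseq q Ξ (a + i) = 0) :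
    Nf q Ξ (a + n) = Nf q Ξ a + n := by
  rw [Nf_eq_count, Nf_eq_count, Nat.count_add, Nat.count_iff_forall.2 h]

theorem Nf_add_of_forall_ne_zero {a n : ℕ} (h : ∀ i < n, xseq q Ξ (a + i) ≠ 0) :
    Nf q Ξ (a + n) = Nf q Ξ a := by
  rw [Nf_eq_count, Nf_eq_count, Nat.count_add, Nat.count_iff_forall_not.2 h, add_zero]

theorem Bf_add_of_forall_eq {a n : ℕ} (h : ∀ i < n, xseq q Ξ (a + i) = xseq q Ξ (a + i + 1)) :
    Bf q Ξ (a + n + 1) = Bf q Ξ (a + 1) := by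
  rw [Bf_succ_eq_one_add_count, Bf_succ_eq_one_add_count, Nat.count_add,
    Nat.count_iff_forall_not.2 fun i hi => not_not.2 (h i hi), add_zero]

theorem Bf_add_two_of_ne {k : ℕ} (h : xseq q Ξ k ≠ xseq q Ξ (k + 1)) :
    Bf q Ξ (k + 2) = Bf q Ξ (k + 1) + 1 := by
  rw [Bf_succ_eq_one_add_count, Bf_succ_eq_one_add_count, Nat.count_succ, if_pos h, add_assoc]

end Counting

section Blocks

/-- The index `j` of the first zero that `I_s` contributes to `x`: `j + 1 = 2^(Q(s))` is the left
endpoint of `I_s`. The indices from `blockStart q s` up to `blockStart q (s + 1)` form the `s`-th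
block. -/
def blockStart (q s : ℕ) : ℕ := 2 ^ (q * s ^ 2) - 1

/-- The length `Q(s+1) − Q(s) + Ξ` of `I_s`, as a natural number (`0` if the length is negative). -/
def zeroRun (q : ℕ) (Ξ : ℤ) (s : ℕ) : ℕ := ((q : ℤ) * (2 * s + 1) + Ξ).toNat

/-- The conditions `q + Ξ ≥ 1` and `2^(q−1) ≥ q + 1 + Ξ`, under which every `I_s` is nonempty and
`J_s` separates it from `I_{s+1}`. The second is doubled to avoid the exponent `q − 1`. -/
structure IsAdmissible (q : ℕ) (Ξ : ℤ) : Prop where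
  one_le_add : 1 ≤ (q : ℤ) + Ξ
  two_mul_le_two_pow : 2 * ((q : ℤ) + 1 + Ξ) ≤ 2 ^ q

variable {q : ℕ} {Ξ : ℤ}

theorem blockStart_add_one (q s : ℕ) : blockStart q s + 1 = 2 ^ (q * s ^ 2) :=
  Nat.sub_add_cancel Nat.one_le_two_pow

theorem blockStart_zero (q : ℕ) : blockStart q 0 = 0 := by
  simp [blockStart]

theorem monotone_blockStart (q : ℕ) : Monotone (blockStart q) := fun _ _ h => by
  unfold blockStart
  gcongr
  exact one_le_two

theorem le_blockStart (hq : q ≠ 0) (s : ℕ) : s ≤ blockStart q s := by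
  have hs : s ≤ q * s ^ 2 :=
    (Nat.le_self_pow two_ne_zero s).trans (Nat.le_mul_of_pos_left _ (Nat.pos_of_ne_zero hq))
  have : s < 2 ^ (q * s ^ 2) := hs.trans_lt Nat.lt_two_pow_self
  rw [← blockStart_add_one] at this
  omega

theorem two_rpow_Qf (q s : ℕ) : (2 : ℝ) ^ Qf q s = blockStart q s + 1 := by
  have h : Qf q s = ((q * s ^ 2 : ℕ) : ℝ) := by simp [Qf]
  rw [h, Real.rpow_natCast]
  exact_mod_cast (blockStart_add_one q s).symm

theorem isAdmissible_of_le_two_rpow (h₁ : 1 ≤ (q : ℤ) + Ξ)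
    (h₂ : (q : ℝ) + 1 + Ξ ≤ 2 ^ ((q : ℝ) - 1)) : IsAdmissible q Ξ := by
  refine ⟨h₁, ?_⟩
  rw [Real.rpow_sub_one two_ne_zero, Real.rpow_natCast, le_div_iff₀ two_pos, mul_comm] at h₂
  exact_mod_cast h₂

namespace IsAdmissible

theorem ne_zero (h : IsAdmissible q Ξ) : q ≠ 0 := by
  rintro rfl
  have h₁ := h.one_le_add
  have h₂ := h.two_mul_le_two_pow
  norm_num at h₁ h₂
  omega

theorem cast_zeroRun (h : IsAdmissible q Ξ) (s : ℕ) :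
    (zeroRun q Ξ s : ℤ) = q * (2 * s + 1) + Ξ := by
  refine Int.toNat_of_nonneg ?_
  have : (0 : ℤ) ≤ q * s := by positivity
  linarith [h.one_le_add]

theorem zeroRun_pos (h : IsAdmissible q Ξ) (s : ℕ) : 0 < zeroRun q Ξ s := by
  have : (0 : ℤ) ≤ q * s := by positivity
  have : (0 : ℤ) < zeroRun q Ξ s := by linarith [h.one_le_add, h.cast_zeroRun s]
  exact_mod_cast this

theorem zeroRun_add_two_le_two_pow (h : IsAdmissible q Ξ) (s : ℕ) :
    zeroRun q Ξ s + 2 ≤ 2 ^ (q * (2 * s + 1)) := by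
  have hpow : ((2 * q * s : ℕ) : ℤ) + 1 ≤ 2 ^ (2 * q * s) := by
    exact_mod_cast Nat.lt_two_pow_self
  have h₁ := h.one_le_add
  zify
  calc (zeroRun q Ξ s : ℤ) + 2 ≤ 2 * ((q : ℤ) + 1 + Ξ) * ((2 * q * s : ℕ) + 1) := by
        rw [h.cast_zeroRun]
        have : (0 : ℤ) ≤ q * s * (q + Ξ) := by positivity
        push_cast
        nlinarith
    _ ≤ 2 ^ q * 2 ^ (2 * q * s) := by gcongr; exact h.two_mul_le_two_pow
    _ = 2 ^ (q * (2 * s + 1)) := by rw [← pow_add]; congr 1; ring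

theorem blockStart_add_zeroRun_lt (h : IsAdmissible q Ξ) (s : ℕ) :
    blockStart q s + zeroRun q Ξ s < blockStart q (s + 1) := by
  have hstep : blockStart q (s + 1) + 1 = (blockStart q s + 1) * 2 ^ (q * (2 * s + 1)) := by
    rw [blockStart_add_one, blockStart_add_one, ← pow_add]
    congr 1
    ring
  nlinarith [h.zeroRun_add_two_le_two_pow s]

theorem add_one_mem_Iset (h : IsAdmissible q Ξ) (s j : ℕ) :
    (j : ℝ) + 1 ∈ Iset q Ξ s ↔
      j ∈ Finset.Ico (blockStart q s) (blockStart q s + zeroRun q Ξ s) := by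
  have hlen : (zeroRun q Ξ s : ℝ) = q * (2 * s + 1) + Ξ := by exact_mod_cast h.cast_zeroRun s
  have hright : (2 : ℝ) ^ Qf q s + Qf q ((s : ℝ) + 1) - Qf q s + Ξ
      = ((blockStart q s + zeroRun q Ξ s : ℕ) : ℝ) + 1 := by
    rw [two_rpow_Qf]
    push_cast [Qf, hlen]
    ring
  rw [Iset, hright, two_rpow_Qf, Set.mem_Ico, Finset.mem_Ico]
  norm_cast
  omega

theorem xseq_eq_zero (h : IsAdmissible q Ξ) {s j : ℕ} (h₁ : blockStart q s ≤ j)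
    (h₂ : j < blockStart q s + zeroRun q Ξ s) : xseq q Ξ j = 0 :=
  if_pos ⟨s, (h.add_one_mem_Iset s j).2 (Finset.mem_Ico.2 ⟨h₁, h₂⟩)⟩

theorem xseq_eq_one (h : IsAdmissible q Ξ) {s j : ℕ} (h₁ : blockStart q s + zeroRun q Ξ s ≤ j)
    (h₂ : j < blockStart q (s + 1)) : xseq q Ξ j = 1 := by
  refine if_neg ?_
  rintro ⟨t, ht⟩
  rw [h.add_one_mem_Iset, Finset.mem_Ico] at ht
  rcases lt_trichotomy t s with hts | rfl | hst
  · have := h.blockStart_add_zeroRun_lt t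
    have := monotone_blockStart q (Nat.add_one_le_of_lt hts)
    omega
  · omega
  · have := monotone_blockStart q (Nat.add_one_le_of_lt hst)
    omega

theorem Nf_of_mem_zeroRun (h : IsAdmissible q Ξ) {s i : ℕ} (hi : i ≤ zeroRun q Ξ s) :
    Nf q Ξ (blockStart q s + i) = Nf q Ξ (blockStart q s) + i :=
  Nf_add_of_forall_eq_zero fun _ _ => h.xseq_eq_zero (s := s) (by omega) (by omega)

theorem Nf_of_mem_oneRun (h : IsAdmissible q Ξ) {s k : ℕ}
    (h₁ : blockStart q s + zeroRun q Ξ s ≤ k) (h₂ : k ≤ blockStart q (s + 1)) :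
    Nf q Ξ k = Nf q Ξ (blockStart q s) + zeroRun q Ξ s := by
  obtain ⟨i, rfl⟩ := Nat.exists_eq_add_of_le h₁
  rw [Nf_add_of_forall_ne_zero, h.Nf_of_mem_zeroRun le_rfl]
  intro _ _
  rw [h.xseq_eq_one (s := s) (by omega) (by omega)]
  exact one_ne_zero

theorem Nf_blockStart (h : IsAdmissible q Ξ) (s : ℕ) :
    (Nf q Ξ (blockStart q s) : ℤ) = q * s ^ 2 + Ξ * s := by
  induction s with
  | zero => simp [blockStart_zero, Nf]
  | succ s ih =>
    rw [h.Nf_of_mem_oneRun (h.blockStart_add_zeroRun_lt s).le le_rfl]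
    push_cast
    rw [ih, h.cast_zeroRun]
    ring

theorem Bf_of_mem_zeroRun (h : IsAdmissible q Ξ) {s i : ℕ} (hi : i < zeroRun q Ξ s) :
    Bf q Ξ (blockStart q s + i + 1) = Bf q Ξ (blockStart q s + 1) := by
  refine Bf_add_of_forall_eq fun _ _ => ?_
  rw [h.xseq_eq_zero (s := s) (by omega) (by omega),
    h.xseq_eq_zero (s := s) (by omega) (by omega)]

theorem Bf_of_mem_oneRun (h : IsAdmissible q Ξ) {s j : ℕ}
    (h₁ : blockStart q s + zeroRun q Ξ s ≤ j) (h₂ : j < blockStart q (s + 1)) :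
    Bf q Ξ (j + 1) = Bf q Ξ (blockStart q s + 1) + 1 := by
  obtain ⟨l, hl⟩ : ∃ l, zeroRun q Ξ s = l + 1 := Nat.exists_eq_add_one.2 (h.zeroRun_pos s)
  obtain ⟨i, rfl⟩ := Nat.exists_eq_add_of_le h₁
  have hconst : Bf q Ξ (blockStart q s + zeroRun q Ξ s + i + 1)
      = Bf q Ξ (blockStart q s + zeroRun q Ξ s + 1) := by
    refine Bf_add_of_forall_eq fun _ _ => ?_
    rw [h.xseq_eq_one (s := s) (by omega) (by omega),
      h.xseq_eq_one (s := s) (by omega) (by omega)]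
  have hjump : xseq q Ξ (blockStart q s + l) ≠ xseq q Ξ (blockStart q s + l + 1) := by
    rw [h.xseq_eq_zero (s := s) (by omega) (by omega),
      h.xseq_eq_one (s := s) (by omega) (by omega)]
    exact zero_ne_one
  rw [hconst, hl, ← add_assoc, Bf_add_two_of_ne hjump, h.Bf_of_mem_zeroRun (by omega)]

theorem Bf_blockStart_add_one (h : IsAdmissible q Ξ) (s : ℕ) :
    Bf q Ξ (blockStart q s + 1) = 2 * s + 1 := by
  induction s with
  | zero => simp [blockStart_zero, Bf]
  | succ s ih =>
    have hlt := h.blockStart_add_zeroRun_lt s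
    have hpos := h.zeroRun_pos (s + 1)
    obtain ⟨l, hl⟩ : ∃ l, blockStart q (s + 1) = l + 1 := Nat.exists_eq_add_one.2 (by omega)
    have hjump : xseq q Ξ l ≠ xseq q Ξ (l + 1) := by
      rw [h.xseq_eq_one (s := s) (by omega) (by omega),
        h.xseq_eq_zero (s := s + 1) (by omega) (by omega)]
      exact one_ne_zero
    rw [hl, Bf_add_two_of_ne hjump, h.Bf_of_mem_oneRun (s := s) (by omega) (by omega), ih]
    ring

end IsAdmissible

end Blocks

section Exponent

/-- The exponent `d t (t − u) / u + d² t / (q u) − 2 · 2^(q ((t − 1)² − (u − 1)²))`. With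
`d = Ξ − 2ξ`, `u = d / (q (1 − τ))` and `λ = 2 · 2^(−q (u − 1)²)`, the indices `j + 1 ∈ J_{t−1}`
contribute at most `2 ^ oneRunExponent q d u t` to `Π(τ, λ)`. -/
noncomputable def oneRunExponent (q d u t : ℝ) : ℝ :=
  d * t * (t - u) / u + d ^ 2 * t / (q * u) - 2 * 2 ^ (q * ((t - 1) ^ 2 - (u - 1) ^ 2))

variable {q d u t : ℝ}

theorem oneRunExponent_le_of_le (hq : 3 ≤ q) (hd₁ : 1 ≤ d) (hd₂ : d ≤ 2) (ht : 0 < t)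
    (htu : t ≤ u) : oneRunExponent q d u t ≤ 2 - min t (u - t) / 2 := by
  have hu : 0 < u := ht.trans_le htu
  have hmain : min t (u - t) / 2 ≤ d * (t * (u - t) / u) := by
    have hmin : min t (u - t) / 2 ≤ t * (u - t) / u := by
      simpa using min_div_two_le_mul_div_add ht.le (sub_nonneg.2 htu) (by simpa using hu)
    have : 0 ≤ t * (u - t) / u := div_nonneg (mul_nonneg ht.le (sub_nonneg.2 htu)) hu.le
    nlinarith
  have herror : d ^ 2 * t / (q * u) ≤ 2 := by
    rw [div_le_iff₀ (by positivity)]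
    have : d ^ 2 ≤ 4 := by nlinarith
    nlinarith
  have hpow : (0 : ℝ) ≤ 2 * 2 ^ (q * ((t - 1) ^ 2 - (u - 1) ^ 2)) := by positivity
  have hsplit : d * t * (t - u) / u = -(d * (t * (u - t) / u)) := by ring
  rw [oneRunExponent, hsplit]
  linarith

theorem oneRunExponent_le_of_lt (hq : 3 ≤ q) (hd₁ : 1 ≤ d) (hd₂ : d ≤ 2) (hu : 1 ≤ u)
    (hut : u < t) : oneRunExponent q d u t ≤ 2 - (t - u) / 2 := by
  obtain ⟨δ, hδ, rfl⟩ : ∃ δ, 0 < δ ∧ t = u + δ := ⟨t - u, sub_pos.2 hut, by ring⟩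
  have hmain : d * (u + δ) * (u + δ - u) / u ≤ 2 * (1 + δ) * δ := by
    rw [div_le_iff₀ (by positivity)]
    have : d * (u + δ) ≤ 2 * (1 + δ) * u := by nlinarith
    nlinarith
  have herror : d ^ 2 * (u + δ) / (q * u) ≤ 4 / 3 * (1 + δ) := by
    have : d ^ 2 ≤ 4 := by nlinarith
    rw [div_le_iff₀ (by positivity)]
    calc d ^ 2 * (u + δ) ≤ 4 * ((1 + δ) * u) := by gcongr; nlinarith
      _ ≤ 4 / 3 * (1 + δ) * (q * u) := by
        have : 0 < (1 + δ) * u := by positivity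
        nlinarith
  have hpow : 1 + 2 * δ ^ 2 ≤ (2 : ℝ) ^ (q * ((u + δ - 1) ^ 2 - (u - 1) ^ 2)) := by
    have hexp : 3 * δ ^ 2 ≤ q * ((u + δ - 1) ^ 2 - (u - 1) ^ 2) := by
      have : 0 ≤ δ * (u - 1) := mul_nonneg hδ.le (sub_nonneg.2 hu)
      calc 3 * δ ^ 2 ≤ q * (δ ^ 2 + 2 * (δ * (u - 1))) := by gcongr; linarith
        _ = q * ((u + δ - 1) ^ 2 - (u - 1) ^ 2) := by ring
    calc 1 + 2 * δ ^ 2 ≤ 1 + 3 * δ ^ 2 * log 2 := by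
          nlinarith [Real.log_two_gt_d9, sq_nonneg δ]
      _ ≤ 2 ^ (3 * δ ^ 2) := one_add_mul_log_two_le_two_rpow _
      _ ≤ 2 ^ (q * ((u + δ - 1) ^ 2 - (u - 1) ^ 2)) := by gcongr; exact one_le_two
  rw [oneRunExponent]
  -- The bounds add up to `2 δ² - 23/6 δ + 8/3 ≥ 0`, whose vertex is `δ = 23/24`.
  nlinarith [sq_nonneg (δ - 23 / 24)]

theorem oneRunExponent_le_of_lt_one (hq : 3 ≤ q) (hd : 1 ≤ d) (hdu : d * (q - 1) < q * u)
    (hu : u < 1) (ht : 1 ≤ t) : oneRunExponent q d u t ≤ 2 - (t - 1) / 2 := by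
  have hqu : q - 1 < q * u := lt_of_le_of_lt (by nlinarith) hdu
  have hu₀ : 0 < u := by nlinarith
  have hmain : d * t * (t - u) / u ≤ 3 / 2 * t ^ 2 - d * t := by
    have hratio : d / u ≤ 3 / 2 := by
      rw [div_le_iff₀ hu₀]
      nlinarith
    calc d * t * (t - u) / u = d / u * t ^ 2 - d * t := by field_simp
      _ ≤ 3 / 2 * t ^ 2 - d * t := by gcongr
  have herror : d ^ 2 * t / (q * u) ≤ d * t / 2 := by
    rw [div_le_div_iff₀ (by positivity) two_pos]
    have : 2 * d ≤ q * u := by nlinarith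
    nlinarith [mul_pos (zero_lt_one.trans_le hd) (zero_lt_one.trans_le ht)]
  have hpow : 3 / 4 + 2 * (t - 1) ^ 2 ≤ (2 : ℝ) ^ (q * ((t - 1) ^ 2 - (u - 1) ^ 2)) := by
    have hexp : 3 * (t - 1) ^ 2 - 1 / 3 ≤ q * ((t - 1) ^ 2 - (u - 1) ^ 2) := by
      have : q * (u - 1) ^ 2 ≤ 1 / 3 := by nlinarith
      nlinarith [sq_nonneg (t - 1)]
    calc 3 / 4 + 2 * (t - 1) ^ 2 ≤ 1 + (3 * (t - 1) ^ 2 - 1 / 3) * log 2 := by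
          nlinarith [Real.log_two_gt_d9, Real.log_two_lt_d9, sq_nonneg (t - 1)]
      _ ≤ 2 ^ (3 * (t - 1) ^ 2 - 1 / 3) := one_add_mul_log_two_le_two_rpow _
      _ ≤ 2 ^ (q * ((t - 1) ^ 2 - (u - 1) ^ 2)) := by gcongr; exact one_le_two
  rw [oneRunExponent]
  -- With `x = t - 1` the bounds add up to `5/2 x² - 3 x + 5/2 ≥ 0`, whose vertex is `x = 3/5`.
  nlinarith [sq_nonneg (t - 1 - 3 / 5)]

theorem oneRunExponent_le (hq : 3 ≤ q) (hd₁ : 1 ≤ d) (hd₂ : d ≤ 2) (hdu : d * (q - 1) < q * u)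
    (ht : 1 ≤ t) : oneRunExponent q d u t ≤ 2 - min (t - 1) |t - u| / 2 := by
  rcases le_or_gt t u with htu | hut
  · refine (oneRunExponent_le_of_le hq hd₁ hd₂ (by linarith) htu).trans ?_
    rw [abs_sub_comm, abs_of_nonneg (sub_nonneg.2 htu)]
    gcongr
    linarith
  rcases le_or_gt 1 u with hu | hu
  · refine (oneRunExponent_le_of_lt hq hd₁ hd₂ hu hut).trans ?_
    rw [abs_of_pos (sub_pos.2 hut)]
    gcongr
    exact min_le_right _ _
  · refine (oneRunExponent_le_of_lt_one hq hd₁ hdu hu ht).trans ?_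
    gcongr
    exact min_le_left _ _

theorem dist_floor_le_abs_sub_add_one (hu : 0 ≤ u) (m : ℕ) :
    (Nat.dist m ⌊u⌋₊ : ℝ) ≤ |m + 1 - u| + 1 := by
  have hfloor := Nat.floor_le hu
  have hlt := Nat.lt_floor_add_one u
  rcases le_total m ⌊u⌋₊ with h | h
  · rw [Nat.dist_eq_sub_of_le h, Nat.cast_sub h]
    linarith [neg_le_abs (m + 1 - u)]
  · rw [Nat.dist_eq_sub_of_le_right h, Nat.cast_sub h]
    linarith [le_abs_self (m + 1 - u)]

theorem two_rpow_oneRunExponent_le (hq : 3 ≤ q) (hd₁ : 1 ≤ d) (hd₂ : d ≤ 2)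
    (hdu : d * (q - 1) < q * u) (m : ℕ) :
    (2 : ℝ) ^ oneRunExponent q d u (m + 1) ≤
      8 * ((3 / 4) ^ m + (3 / 4) ^ Nat.dist m ⌊u⌋₊) := by
  have hu : 0 ≤ u := by nlinarith
  have hexp : oneRunExponent q d u (m + 1) ≤ 3 + -(min (m : ℝ) (Nat.dist m ⌊u⌋₊) / 2) := by
    have hmin : min (m : ℝ) (Nat.dist m ⌊u⌋₊) ≤ min (m : ℝ) |m + 1 - u| + 1 := by
      rw [← min_add_add_right]
      exact min_le_min (by simp) (dist_floor_le_abs_sub_add_one hu m)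
    have h := oneRunExponent_le (t := m + 1) hq hd₁ hd₂ hdu (by simp)
    rw [add_sub_cancel_right] at h
    linarith
  calc (2 : ℝ) ^ oneRunExponent q d u (m + 1)
      ≤ 2 ^ (3 + -(min (m : ℝ) (Nat.dist m ⌊u⌋₊) / 2)) := by gcongr; exact one_le_two
    _ = 8 * 2 ^ (-(min (m : ℝ) (Nat.dist m ⌊u⌋₊) / 2)) := by
        rw [Real.rpow_add two_pos]
        norm_num
    _ ≤ 8 * ((3 / 4) ^ m + (3 / 4) ^ Nat.dist m ⌊u⌋₊) := by
        gcongr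
        exact two_rpow_neg_min_div_two_le m _

theorem sum_two_rpow_oneRunExponent_le (hq : 3 ≤ q) (hd₁ : 1 ≤ d) (hd₂ : d ≤ 2)
    (hdu : d * (q - 1) < q * u) (M : ℕ) :
    ∑ m ∈ Finset.range M, (2 : ℝ) ^ oneRunExponent q d u (m + 1) ≤ 96 := by
  have hnear := sum_range_pow_dist_le (r := 3 / 4) (by norm_num) (by norm_num) M ⌊u⌋₊
  have hstart := sum_range_pow_le_inv_one_sub (r := 3 / 4) (by norm_num) (by norm_num) M
  calc ∑ m ∈ Finset.range M, (2 : ℝ) ^ oneRunExponent q d u (m + 1)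
      ≤ ∑ m ∈ Finset.range M, 8 * ((3 / 4 : ℝ) ^ m + (3 / 4) ^ Nat.dist m ⌊u⌋₊) :=
        Finset.sum_le_sum fun m _ => two_rpow_oneRunExponent_le hq hd₁ hd₂ hdu m
    _ ≤ 96 := by
        rw [← Finset.mul_sum, Finset.sum_add_distrib]
        norm_num at hnear hstart ⊢
        linarith

end Exponent

section Series

/-- The `k`-th summand `2^(−λk − τ·N(k) + τ·ξ·B(k))` of `Π(τ, λ)`. -/
noncomputable def Pi2Term (q Ξ : ℤ) (ξ τ lam : ℝ) (k : ℕ) : ℝ :=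
  2 ^ (-lam * k - τ * Nf q Ξ k + τ * ξ * Bf q Ξ k)

theorem Pi2Term_nonneg (q Ξ : ℤ) (ξ τ lam : ℝ) (k : ℕ) : 0 ≤ Pi2Term q Ξ ξ τ lam k := by
  unfold Pi2Term
  positivity

theorem Pi2Term_zero (q Ξ : ℤ) (ξ τ lam : ℝ) : Pi2Term q Ξ ξ τ lam 0 = 1 := by
  simp [Pi2Term, Nf, Bf]

variable {q : ℕ} {Ξ : ℤ} {ξ τ lam : ℝ}

theorem Pi2_le_of_forall_sum_le (hq : q ≠ 0) {C : ℝ}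
    (hC : ∀ n, ∑ s ∈ Finset.range n, ∑ j ∈ Finset.Ico (blockStart q s) (blockStart q (s + 1)),
      Pi2Term q Ξ ξ τ lam (j + 1) ≤ C) :
    Pi2 q Ξ ξ τ lam ≤ ENNReal.ofReal (C + 1) := by
  refine ENNReal.tsum_le_of_sum_range_le fun n => ?_
  change ∑ k ∈ Finset.range n, ENNReal.ofReal (Pi2Term q Ξ ξ τ lam k) ≤ _
  rw [← ENNReal.ofReal_sum_of_nonneg fun k _ => Pi2Term_nonneg _ _ _ _ _ k]
  refine ENNReal.ofReal_le_ofReal ?_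
  calc ∑ k ∈ Finset.range n, Pi2Term q Ξ ξ τ lam k
      ≤ ∑ k ∈ Finset.range (blockStart q n + 1), Pi2Term q Ξ ξ τ lam k :=
        Finset.sum_le_sum_of_subset_of_nonneg
          (Finset.range_subset_range.2 ((le_blockStart hq n).trans (Nat.le_succ _)))
          fun k _ _ => Pi2Term_nonneg _ _ _ _ _ k
    _ ≤ C + 1 := by
        rw [Finset.sum_range_succ', Pi2Term_zero,
          sum_range_eq_sum_sum_Ico (monotone_blockStart q) (blockStart_zero q)]
        gcongr
        exact hC n

theorem oneRunExponent_div (hq : q ≠ 0) (hτ : τ ≠ 1) {d : ℝ} (hd : d ≠ 0) (s : ℕ) :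
    oneRunExponent q d (d / (q * (1 - τ))) (s + 1) =
      q * (1 - τ) * (s + 1) ^ 2 - τ * d * (s + 1) -
        2 * 2 ^ (-(q : ℝ) * (d / (q * (1 - τ)) - 1) ^ 2) * 2 ^ Qf q s := by
  have hε : 1 - τ ≠ 0 := sub_ne_zero.2 hτ.symm
  have hpow (x : ℝ) : (2 : ℝ) ^ (-(q : ℝ) * x ^ 2) * 2 ^ Qf q s
      = 2 ^ ((q : ℝ) * ((s + 1 - 1) ^ 2 - x ^ 2)) := by
    rw [← Real.rpow_add two_pos, Qf]
    congr 1
    push_cast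
    ring
  rw [mul_assoc 2, hpow, oneRunExponent, sub_left_inj]
  field_simp
  ring

namespace IsAdmissible

theorem Pi2Term_zeroRun_le (h : IsAdmissible q Ξ) (hξ : 1 ≤ Ξ - 2 * ξ) (hlam : 0 ≤ lam)
    (hτ : 1 / 2 ≤ τ) {s i : ℕ} (hi : i < zeroRun q Ξ s) :
    Pi2Term q Ξ ξ τ lam (blockStart q s + i + 1) ≤
      2 ^ (τ * ξ) * (1 / 2) ^ s * (3 / 4) ^ i := by
  have hN : (Nf q Ξ (blockStart q s + i + 1) : ℝ) = q * s ^ 2 + Ξ * s + i + 1 := by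
    rw [add_assoc, h.Nf_of_mem_zeroRun hi]
    push_cast
    rw [← add_assoc]
    congr 2
    exact_mod_cast h.Nf_blockStart s
  have hB : Bf q Ξ (blockStart q s + i + 1) = 2 * s + 1 := by
    rw [h.Bf_of_mem_zeroRun hi, h.Bf_blockStart_add_one]
  have hdecay : (s : ℝ) + i / 2 ≤ τ * (q * s ^ 2 + (Ξ - 2 * ξ) * s + i + 1) := by
    have hsq : (s : ℝ) ≤ q * s ^ 2 := by
      exact_mod_cast (Nat.le_self_pow two_ne_zero s).trans
        (Nat.le_mul_of_pos_left _ (Nat.pos_of_ne_zero h.ne_zero))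
    have hlin : (s : ℝ) ≤ (Ξ - 2 * ξ) * s := le_mul_of_one_le_left s.cast_nonneg hξ
    calc (s : ℝ) + i / 2 ≤ 1 / 2 * (q * s ^ 2 + (Ξ - 2 * ξ) * s + i + 1) := by linarith
      _ ≤ τ * (q * s ^ 2 + (Ξ - 2 * ξ) * s + i + 1) := by gcongr
  have hk : 0 ≤ lam * ((blockStart q s + i + 1 : ℕ) : ℝ) := by positivity
  calc Pi2Term q Ξ ξ τ lam (blockStart q s + i + 1)
      ≤ 2 ^ (τ * ξ + -(s : ℝ) + -(i / 2 : ℝ)) := by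
        rw [Pi2Term, hN, hB]
        refine Real.rpow_le_rpow_of_exponent_le one_le_two ?_
        push_cast at hk ⊢
        linarith
    _ = 2 ^ (τ * ξ) * (1 / 2) ^ s * 2 ^ (-(i / 2 : ℝ)) := by
        rw [Real.rpow_add two_pos, Real.rpow_add two_pos, Real.rpow_neg zero_le_two (s : ℝ),
          Real.rpow_natCast, one_div, inv_pow]
    _ ≤ 2 ^ (τ * ξ) * (1 / 2) ^ s * (3 / 4) ^ i := by
        gcongr
        exact two_rpow_neg_div_two_le i

theorem sum_zeroRun_le (h : IsAdmissible q Ξ) (hξ : 1 ≤ Ξ - 2 * ξ) (hlam : 0 ≤ lam)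
    (hτ : 1 / 2 ≤ τ) (s : ℕ) :
    ∑ j ∈ Finset.Ico (blockStart q s) (blockStart q s + zeroRun q Ξ s),
      Pi2Term q Ξ ξ τ lam (j + 1) ≤ 4 * 2 ^ (τ * ξ) * (1 / 2) ^ s := by
  rw [Finset.sum_Ico_eq_sum_range, Nat.add_sub_cancel_left]
  calc ∑ i ∈ Finset.range (zeroRun q Ξ s), Pi2Term q Ξ ξ τ lam (blockStart q s + i + 1)
      ≤ ∑ i ∈ Finset.range (zeroRun q Ξ s), 2 ^ (τ * ξ) * (1 / 2) ^ s * (3 / 4) ^ i :=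
        Finset.sum_le_sum fun i hi => h.Pi2Term_zeroRun_le hξ hlam hτ (Finset.mem_range.1 hi)
    _ ≤ 2 ^ (τ * ξ) * (1 / 2) ^ s * (1 - 3 / 4)⁻¹ := by
        rw [← Finset.mul_sum]
        gcongr
        exact sum_range_pow_le_inv_one_sub (by norm_num) (by norm_num) _
    _ = 4 * 2 ^ (τ * ξ) * (1 / 2) ^ s := by ring

theorem Pi2Term_oneRun_le (h : IsAdmissible q Ξ) (hlam : 0 ≤ lam) {s j : ℕ}
    (h₁ : blockStart q s + zeroRun q Ξ s ≤ j) (h₂ : j < blockStart q (s + 1)) :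
    Pi2Term q Ξ ξ τ lam (j + 1) ≤
      2 ^ (-lam * 2 ^ Qf q s - τ * (q * (s + 1) ^ 2 + (Ξ - 2 * ξ) * (s + 1))) := by
  have hN : (Nf q Ξ (j + 1) : ℝ) = q * (s + 1) ^ 2 + Ξ * (s + 1) := by
    rw [h.Nf_of_mem_oneRun (h₁.trans j.le_succ) h₂,
      ← h.Nf_of_mem_oneRun (h.blockStart_add_zeroRun_lt s).le le_rfl]
    exact_mod_cast h.Nf_blockStart (s + 1)
  have hB : Bf q Ξ (j + 1) = 2 * s + 2 := by
    rw [h.Bf_of_mem_oneRun h₁ h₂, h.Bf_blockStart_add_one]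
  have hk : lam * 2 ^ Qf q s ≤ lam * (j + 1) := by
    rw [two_rpow_Qf]
    gcongr
    omega
  rw [Pi2Term, hN, hB]
  refine Real.rpow_le_rpow_of_exponent_le one_le_two ?_
  push_cast
  linarith

theorem sum_oneRun_le (h : IsAdmissible q Ξ) (hlam : 0 ≤ lam) (s : ℕ) :
    ∑ j ∈ Finset.Ico (blockStart q s + zeroRun q Ξ s) (blockStart q (s + 1)),
      Pi2Term q Ξ ξ τ lam (j + 1) ≤
    2 ^ (q * (1 - τ) * (s + 1) ^ 2 - τ * (Ξ - 2 * ξ) * (s + 1) - lam * 2 ^ Qf q s) := by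
  have hcard : ((blockStart q (s + 1) - (blockStart q s + zeroRun q Ξ s) : ℕ) : ℝ) ≤
      2 ^ Qf q ((s + 1 : ℕ) : ℝ) := by
    rw [two_rpow_Qf]
    exact_mod_cast (Nat.sub_le _ _).trans (Nat.le_succ _)
  refine (Finset.sum_le_card_nsmul _ _ _ fun j hj =>
    h.Pi2Term_oneRun_le hlam (Finset.mem_Ico.1 hj).1 (Finset.mem_Ico.1 hj).2).trans ?_
  rw [nsmul_eq_mul, Nat.card_Ico]
  refine (mul_le_mul_of_nonneg_right hcard (by positivity)).trans_eq ?_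
  rw [← Real.rpow_add two_pos, Qf.eq_1 _ ((s + 1 : ℕ) : ℝ)]
  congr 1
  push_cast
  ring

theorem sum_block_le (h : IsAdmissible q Ξ) (hξ : 1 ≤ Ξ - 2 * ξ) (hτ : 1 / 2 ≤ τ) (hτ₁ : τ < 1)
    (s : ℕ) :
    ∑ j ∈ Finset.Ico (blockStart q s) (blockStart q (s + 1)),
      Pi2Term q Ξ ξ τ (2 * 2 ^ (-(q : ℝ) * ((Ξ - 2 * ξ) / (q * (1 - τ)) - 1) ^ 2)) (j + 1) ≤
    4 * 2 ^ (τ * ξ) * (1 / 2) ^ s +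
      2 ^ oneRunExponent q (Ξ - 2 * ξ) ((Ξ - 2 * ξ) / (q * (1 - τ))) (s + 1) := by
  have hlam : (0 : ℝ) ≤ 2 * 2 ^ (-(q : ℝ) * ((Ξ - 2 * ξ) / (q * (1 - τ)) - 1) ^ 2) := by
    positivity
  rw [← Finset.sum_Ico_consecutive _ (Nat.le_add_right _ (zeroRun q Ξ s))
    (h.blockStart_add_zeroRun_lt s).le, oneRunExponent_div h.ne_zero hτ₁.ne (by linarith)]
  exact add_le_add (h.sum_zeroRun_le hξ hlam hτ s) (h.sum_oneRun_le hlam s)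

theorem sum_blocks_le (h : IsAdmissible q Ξ) (hq : 3 ≤ q) (hξ₁ : 1 ≤ Ξ - 2 * ξ)
    (hξ₂ : Ξ - 2 * ξ ≤ 2) (hτ₁ : ((q : ℝ) - 2) / (q - 1) < τ) (hτ₂ : τ < 1) (n : ℕ) :
    ∑ s ∈ Finset.range n, ∑ j ∈ Finset.Ico (blockStart q s) (blockStart q (s + 1)),
      Pi2Term q Ξ ξ τ (2 * 2 ^ (-(q : ℝ) * ((Ξ - 2 * ξ) / (q * (1 - τ)) - 1) ^ 2)) (j + 1) ≤
    8 * 2 ^ (τ * ξ) + 96 := by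
  have hq' : (3 : ℝ) ≤ q := by exact_mod_cast hq
  rw [div_lt_iff₀ (by linarith)] at hτ₁
  have hhalf : 1 / 2 ≤ τ := by nlinarith
  have hdu : (Ξ - 2 * ξ) * ((q : ℝ) - 1) < q * ((Ξ - 2 * ξ) / (q * (1 - τ))) := by
    have hε : 0 < 1 - τ := sub_pos.2 hτ₂
    rw [mul_div_assoc', mul_div_mul_left _ _ (by positivity), lt_div_iff₀ hε, mul_assoc]
    exact mul_lt_of_lt_one_right (by linarith) (by linarith)
  calc _ ≤ ∑ s ∈ Finset.range n, (4 * 2 ^ (τ * ξ) * (1 / 2) ^ s +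
        2 ^ oneRunExponent q (Ξ - 2 * ξ) ((Ξ - 2 * ξ) / (q * (1 - τ))) (s + 1)) :=
        Finset.sum_le_sum fun s _ => h.sum_block_le hξ₁ hhalf hτ₂ s
    _ ≤ 4 * 2 ^ (τ * ξ) * 2 + 96 := by
        rw [Finset.sum_add_distrib, ← Finset.mul_sum]
        gcongr
        · exact sum_geometric_two_le n
        · exact sum_two_rpow_oneRunExponent_le hq' hξ₁ hξ₂ hdu n
    _ = 8 * 2 ^ (τ * ξ) + 96 := by ring

end IsAdmissible

end Series

theorem stmt9 (Ξ q : ℤ) (hq : 3 ≤ q) (hqΞ : 1 ≤ q + Ξ)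
    (hpow : (q : ℝ) + 1 + (Ξ : ℝ) ≤ (2 : ℝ) ^ ((q : ℝ) - 1))
    (ξ : ℝ) (hξ1 : 1 ≤ (Ξ : ℝ) - 2 * ξ) (hξ2 : (Ξ : ℝ) - 2 * ξ ≤ 2) :
    ∀ τ : ℝ, ((q : ℝ) - 2) / ((q : ℝ) - 1) < τ → τ < 1 →
      Pi2 q Ξ ξ τ
          (2 * (2 : ℝ) ^ (-(q : ℝ) *
            (((Ξ : ℝ) - 2 * ξ) / ((q : ℝ) * (1 - τ)) - 1) ^ 2)) ≤
        ENNReal.ofReal (10 * (2 : ℝ) ^ (τ * ξ) + 101) := by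
  intro τ hτ₁ hτ₂
  lift q to ℕ using by omega
  rw [Int.cast_natCast] at hpow hτ₁ ⊢
  have hadm : IsAdmissible q Ξ := isAdmissible_of_le_two_rpow hqΞ hpow
  have hblocks := hadm.sum_blocks_le (by omega) hξ1 hξ2 hτ₁ hτ₂
  refine (Pi2_le_of_forall_sum_le hadm.ne_zero hblocks).trans (ENNReal.ofReal_le_ofReal ?_)
  linarith [Real.rpow_nonneg zero_le_two (τ * ξ)]
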